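/- arXiv:0807.4128 — 9 statements merged into one kernel-verified Lean document; each statement's English description precedes it below -/
import Mathlib

section
/- Let a ≥ 1 be an integer and let x_1, …, x_{a+1} be complex numbers all of which are nonzero. Then for every row index i with 0 ≤ i ≤ 2^a - 1, the set of column indices j for which the (i, j) entry of G_a(x_1, …, x_{a+1}) is nonzero equals N_i^(a) = {i} ∪ {i ⊕ 2^j : 0 ≤ j ≤ a-1}. -/
/-!
The argument is an induction on `a`, carried out with the symmetric form of the neighbourhood
relation: `j ∈ N_i` iff `i ⊕ j` is `0` or one of the powers `2^k` with `k < a`.  Symmetry absorbs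
the conjugate transpose in the lower right block.  Writing an index in the upper half as
`j + 2^a = j ⊕ 2^a` with `j < 2^a`, the shift cancels in `i ⊕ j` on the diagonal blocks, so the
induction hypothesis applies.  On the off-diagonal blocks it turns `i ⊕ j` into
`(i ⊕ j) + 2^a`, which is an admissible power of two exactly when `i = j`, i.e. on the diagonal
of the block.
-/

open Matrix Complex

noncomputable section

/-- Entry function of the square complex orthogonal design `G_a`.  Variables are
indexed `0, 1, …, a`, corresponding to `x_1, …, x_{a+1}` of the paper.  For `a = 0`
the design is the `1 × 1` matrix `[x 0]`, and the recursive block structure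
`G_{a+1} = [[G_a, -conj(x_{a+2})·I], [x_{a+2}·I, G_aᴴ]]` is encoded entrywise. -/
def Gent : ℕ → (ℕ → ℂ) → ℕ → ℕ → ℂ
  | 0, x, _, _ => x 0
  | (a + 1), x, i, j =>
    if i < 2 ^ a then
      if j < 2 ^ a then Gent a x i j
      else if j = i + 2 ^ a then -((starRingEnd ℂ) (x (a + 1))) else 0
    else
      if j < 2 ^ a then (if i = j + 2 ^ a then x (a + 1) else 0)
      else (starRingEnd ℂ) (Gent a x (j - 2 ^ a) (i - 2 ^ a))

/-- The design `G_a` as a `2^a × 2^a` complex matrix. -/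
def Gmat (a : ℕ) (x : ℕ → ℂ) : Matrix (Fin (2 ^ a)) (Fin (2 ^ a)) ℂ :=
  Matrix.of fun i j => Gent a x i j
/-- `N_i^(a) = {i} ∪ {i ⊕ 2^j : 0 ≤ j ≤ a-1}` — the set of column indices of the
nonzero entries of row `i` of `G_a` (⊕ is bitwise XOR). -/
def Nset (a i : ℕ) : Set ℕ := {i} ∪ {k | ∃ j < a, k = i ^^^ 2 ^ j}

/-- The symmetric form of the neighbourhood relation: `i` and `j` agree, or differ in exactly one
bit, at a position below `a`. -/
def Near (a i j : ℕ) : Prop := i ^^^ j = 0 ∨ ∃ k < a, i ^^^ j = 2 ^ k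

lemma Near.comm {a i j : ℕ} : Near a i j ↔ Near a j i := by
  rw [Near, Near, Nat.xor_comm]

lemma add_two_pow_eq_xor {a i : ℕ} (hi : i < 2 ^ a) : i + 2 ^ a = i ^^^ 2 ^ a := by
  have h := Nat.two_pow_add_eq_or_of_lt hi 1
  rw [mul_one] at h
  rw [add_comm, h]
  apply Nat.eq_of_testBit_eq
  intro k
  rw [Nat.testBit_or, Nat.testBit_xor, Nat.testBit_two_pow]
  by_cases hk : a = k
  · subst hk
    simp [Nat.testBit_lt_two_pow hi]
  · simp [hk]

lemma near_succ_low {a i j : ℕ} (hi : i < 2 ^ a) (hj : j < 2 ^ a) :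
    Near (a + 1) i j ↔ Near a i j := by
  have h := Nat.xor_lt_two_pow hi hj
  refine or_congr_right ⟨?_, ?_⟩
  · rintro ⟨k, -, e⟩
    rw [e] at h
    exact ⟨k, (Nat.pow_lt_pow_iff_right (by norm_num)).1 h, e⟩
  · rintro ⟨k, hk, e⟩
    exact ⟨k, by omega, e⟩

lemma near_succ_high {a i j : ℕ} (hi : i < 2 ^ a) (hj : j < 2 ^ a) :
    Near (a + 1) (i + 2 ^ a) (j + 2 ^ a) ↔ Near a i j := by
  rw [← near_succ_low hi hj]
  have e : (i + 2 ^ a) ^^^ (j + 2 ^ a) = i ^^^ j := by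
    rw [add_two_pow_eq_xor hi, add_two_pow_eq_xor hj, Nat.xor_comm j, ← Nat.xor_assoc,
      Nat.xor_xor_cancel_right]
  rw [Near, Near, e]

lemma near_succ_mixed {a i j : ℕ} (hi : i < 2 ^ a) (hj : j < 2 ^ a) :
    Near (a + 1) i (j + 2 ^ a) ↔ i = j := by
  have e : i ^^^ (j + 2 ^ a) = (i ^^^ j) + 2 ^ a := by
    rw [add_two_pow_eq_xor hj, add_two_pow_eq_xor (Nat.xor_lt_two_pow hi hj), Nat.xor_assoc]
  rw [Near, e, ← Nat.xor_eq_zero_iff (x := i) (y := j)]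
  have hp : 0 < 2 ^ a := by positivity
  constructor
  · rintro (h | ⟨k, hk, h⟩)
    · omega
    · have : 2 ^ k ≤ 2 ^ a := Nat.pow_le_pow_right (by norm_num) (by omega)
      omega
  · intro h
    exact Or.inr ⟨a, by omega, by omega⟩

lemma Gent_ne_zero_iff (x : ℕ → ℂ) : ∀ (a : ℕ), (∀ k < a + 1, x k ≠ 0) →
    ∀ i j : ℕ, i < 2 ^ a → j < 2 ^ a → (Gent a x i j ≠ 0 ↔ Near a i j) := by
  intro a
  induction a with
  | zero =>
    intro hx i j hi hj
    obtain rfl : i = 0 := by omega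
    obtain rfl : j = 0 := by omega
    simp [Gent, Near, hx 0]
  | succ a ih =>
    intro hx i j hi hj
    have ih := ih fun k hk => hx k (by omega)
    have hxa := hx (a + 1) (by omega)
    rw [pow_succ] at hi hj
    rw [Gent]
    by_cases h1 : i < 2 ^ a <;> by_cases h2 : j < 2 ^ a
    · rw [if_pos h1, if_pos h2, near_succ_low h1 h2, ih i j h1 h2]
    · obtain ⟨j, rfl⟩ := Nat.exists_eq_add_of_le' (not_lt.1 h2)
      rw [if_pos h1, if_neg h2, near_succ_mixed h1 (by omega)]
      simp [hxa, eq_comm (a := i) (b := j)]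
    · obtain ⟨i, rfl⟩ := Nat.exists_eq_add_of_le' (not_lt.1 h1)
      rw [if_neg h1, if_pos h2, Near.comm, near_succ_mixed h2 (by omega)]
      simp [hxa, eq_comm (a := i) (b := j)]
    · obtain ⟨i, rfl⟩ := Nat.exists_eq_add_of_le' (not_lt.1 h1)
      obtain ⟨j, rfl⟩ := Nat.exists_eq_add_of_le' (not_lt.1 h2)
      rw [if_neg h1, if_neg h2, near_succ_high (by omega) (by omega), Nat.add_sub_cancel,
        Nat.add_sub_cancel, Near.comm, ← ih j i (by omega) (by omega), Ne, map_eq_zero]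

lemma mem_Nset_iff_near {a i j : ℕ} : j ∈ Nset a i ↔ Near a i j := by
  have e : ∀ m, j = i ^^^ m ↔ i ^^^ j = m := fun m =>
    ⟨fun h => by rw [h, Nat.xor_xor_cancel_left], fun h => by rw [← h, Nat.xor_xor_cancel_left]⟩
  simp only [Nset, Near, Set.mem_union, Set.mem_singleton_iff, Set.mem_ofPred_eq, e,
    Nat.xor_eq_zero_iff, eq_comm (a := i) (b := j)]

lemma lt_of_mem_Nset {a i j : ℕ} (hi : i < 2 ^ a) (h : j ∈ Nset a i) : j < 2 ^ a := by
  rcases h with rfl | ⟨k, hk, rfl⟩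
  · exact hi
  · exact Nat.xor_lt_two_pow hi (Nat.pow_lt_pow_right (by norm_num) hk)

/-- If `x_1, …, x_{a+1}` are all nonzero then for every row index `i < 2^a`, the set
of column indices `j < 2^a` at which the `(i, j)` entry of `G_a(x_1, …, x_{a+1})` is
nonzero equals `N_i^(a) = {i} ∪ {i ⊕ 2^j : 0 ≤ j ≤ a-1}`. -/
theorem nonzero_columns_eq_Nset (a : ℕ) (ha : 1 ≤ a) (x : ℕ → ℂ)
    (hx : ∀ k < a + 1, x k ≠ 0) (i : ℕ) (hi : i < 2 ^ a) :
    {j : ℕ | j < 2 ^ a ∧ Gent a x i j ≠ 0} = Nset a i := by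
  ext j
  constructor
  · rintro ⟨hj, h⟩
    exact mem_Nset_iff_near.2 ((Gent_ne_zero_iff x a hx i j hi hj).1 h)
  · intro h
    have hj := lt_of_mem_Nset hi h
    exact ⟨hj, (Gent_ne_zero_iff x a hx i j hi hj).2 (mem_Nset_iff_near.1 h)⟩
end
end

section
/- Let a ≥ 1 be an integer and let d be the unique positive integer with 2^{d-1} ≤ a < 2^d. The map f : M_a → M_a' is injective; consequently |M_a'| = |M_a| = a - d. -/
/-!
If `x` is not a power of `2`, every binary digit `1` of `x` sits at a position `j` with `2 ^ j < x`.
So the digit sum in `fM x` is a sum of distinct powers of `2` with exponents `< x - 1`, hence is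
`< 2 ^ (x - 1)`. Thus `x - 1` is the position of the leading bit of `fM x`, and `fM x`
determines `x`. For the cardinality, the powers of `2` in `[1, a]` are exactly `2 ^ 0, …, 2 ^ (d - 1)`.
-/

/-- `M_a = {x : 1 ≤ x ≤ a and x is not a power of 2}`. -/
def Ma (a : ℕ) : Set ℕ := {x | 1 ≤ x ∧ x ≤ a ∧ ∀ k : ℕ, x ≠ 2 ^ k}

/-- For `x` with radix-2 representation `x = Σ_j x_j 2^j`,
`f(x) = 2^(x-1) + Σ_j x_j 2^(2^j - 1)`  (the sum ranges over all binary digits of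
`x`, all of which occur at positions `< x`). -/
def fM (x : ℕ) : ℕ :=
  2 ^ (x - 1) + ∑ j ∈ Finset.range x, if Nat.testBit x j then 2 ^ (2 ^ j - 1) else 0

/-- The Hamming weight of a natural number: the number of ones in its radix-2
representation (the sum of the binary digits). -/
def wt (n : ℕ) : ℕ := (Nat.digits 2 n).sum

/-- The leading bit of `fM x` is at position `x - 1`. -/
lemma log_fM {x : ℕ} (hx : 1 ≤ x) (hp : ∀ k : ℕ, x ≠ 2 ^ k) : Nat.log 2 (fM x) = x - 1 := by
  have hlt : (∑ j ∈ Finset.range x, if Nat.testBit x j then 2 ^ (2 ^ j - 1) else 0)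
      < 2 ^ (x - 1) := by
    rw [← Finset.sum_filter]
    have hinj : Set.InjOn (fun j : ℕ => 2 ^ j - 1)
        ((Finset.range x).filter (fun j => Nat.testBit x j = true)) := by
      intro i _ j _ hij
      have hi : 1 ≤ 2 ^ i := Nat.one_le_two_pow
      have hj : 1 ≤ 2 ^ j := Nat.one_le_two_pow
      exact Nat.pow_right_injective le_rfl (by simp only at hij ⊢; omega)
    rw [← Finset.sum_image (f := fun k => 2 ^ k) hinj]
    refine Nat.geomSum_lt le_rfl ?_
    intro k hk
    obtain ⟨j, hj, rfl⟩ := Finset.mem_image.mp hk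
    have hle : 2 ^ j ≤ x := Nat.ge_two_pow_of_testBit (Finset.mem_filter.mp hj).2
    have hne := hp j
    have hpos : 1 ≤ 2 ^ j := Nat.one_le_two_pow
    omega
  refine (Nat.log_eq_iff (Or.inr ⟨by norm_num, ?_⟩)).mpr ⟨?_, ?_⟩
  · unfold fM
    positivity
  · unfold fM
    omega
  · unfold fM
    rw [pow_succ]
    omega

lemma Ma_eq {a d : ℕ} (h2 : a < 2 ^ d) :
    Ma a = ↑(Finset.Icc 1 a \ (Finset.range d).image (fun k => 2 ^ k)) := by
  ext x
  simp only [Ma, Set.mem_ofPred_eq, Finset.coe_sdiff, Set.mem_sdiff, Finset.mem_coe,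
    Finset.mem_Icc, Finset.mem_image, Finset.mem_range, not_exists, not_and]
  constructor
  · rintro ⟨hx, hxa, hp⟩
    exact ⟨⟨hx, hxa⟩, fun k _ h => hp k h.symm⟩
  · rintro ⟨⟨hx, hxa⟩, hp⟩
    refine ⟨hx, hxa, fun k hk => hp k ?_ hk.symm⟩
    exact (Nat.pow_lt_pow_iff_right (a := 2) (by norm_num)).mp (by omega)

lemma ncard_Ma {a d : ℕ} (h1 : 2 ^ (d - 1) ≤ a) (h2 : a < 2 ^ d) :
    (Ma a).ncard = a - d := by
  rw [Ma_eq h2, Set.ncard_coe_finset, Finset.card_sdiff_of_subset,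
    Finset.card_image_of_injective _ (Nat.pow_right_injective le_rfl)]
  · simp
  · intro x hx
    obtain ⟨k, hk, rfl⟩ := Finset.mem_image.mp hx
    have hkd := Finset.mem_range.mp hk
    exact Finset.mem_Icc.mpr ⟨Nat.one_le_two_pow,
      (Nat.pow_le_pow_right (by norm_num) (by omega)).trans h1⟩

/-- Let `d` be the unique positive integer with `2^(d-1) ≤ a < 2^d`.  The map
`f : M_a → M_a'` is injective; consequently `|M_a'| = |M_a| = a - d`. -/
theorem fM_injOn_and_card (a d : ℕ) (ha : 1 ≤ a) (hd : 1 ≤ d)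
    (h1 : 2 ^ (d - 1) ≤ a) (h2 : a < 2 ^ d) :
    Set.InjOn fM (Ma a) ∧ (fM '' Ma a).ncard = a - d ∧ (Ma a).ncard = a - d := by
  have hinj : Set.InjOn fM (Ma a) := by
    rintro x ⟨hx, -, hpx⟩ y ⟨hy, -, hpy⟩ hxy
    have hlog := log_fM hx hpx
    rw [hxy, log_fM hy hpy] at hlog
    omega
  exact ⟨hinj, hinj.ncard_image.trans (ncard_Ma h1 h2), ncard_Ma h1 h2⟩
end

section
/- Let a ≥ 1 be an integer and let d be the unique positive integer with 2^{d-1} ≤ a < 2^d. For every x ∈ M_a, wt(f(x)) = 1 + wt(x); in particular, since wt(x) ≥ 2 for x ∈ M_a, every element of M_a' has Hamming weight at least 3. -/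
lemma wt_step (n : ℕ) : wt n = n % 2 + wt (n / 2) := by
  rcases Nat.eq_zero_or_pos n with rfl | h
  · simp [wt]
  · unfold wt
    rw [Nat.digits_def' (by norm_num) h, List.sum_cons]

lemma wt_add_two_pow (k n : ℕ) (h : n < 2 ^ k) : wt (n + 2 ^ k) = wt n + 1 := by
  induction k generalizing n with
  | zero =>
    obtain rfl : n = 0 := by simpa using h
    simp [wt]
  | succ k ih =>
    rw [pow_succ] at h ⊢
    rw [wt_step, wt_step n, show (n + 2 ^ k * 2) % 2 = n % 2 by omega,
      show (n + 2 ^ k * 2) / 2 = n / 2 + 2 ^ k by omega, ih _ (by omega), add_assoc]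

lemma wt_sum_two_pow (S : Finset ℕ) : wt (∑ i ∈ S, 2 ^ i) = S.card := by
  induction S using Finset.induction_on_max with
  | empty => simp [wt]
  | insert k S hk ih =>
    have hkS : k ∉ S := fun h => lt_irrefl _ (hk k h)
    rw [Finset.sum_insert hkS, Finset.card_insert_of_notMem hkS, add_comm,
      wt_add_two_pow _ _ (Nat.geomSum_lt le_rfl hk), ih]

lemma sum_testBit (x m : ℕ) :
    ∑ j ∈ Finset.range m, (if Nat.testBit x j then 2 ^ j else 0) = x % 2 ^ m := by
  induction m with
  | zero => simp [Nat.mod_one]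
  | succ m ih =>
    rw [Finset.sum_range_succ, ih, Nat.mod_pow_succ, ← Nat.toNat_testBit]
    cases Nat.testBit x m <;> simp

lemma wt_fM_of_not_pow (x : ℕ) (hx : 1 ≤ x) (hp : ∀ k : ℕ, x ≠ 2 ^ k) :
    wt (fM x) = 1 + wt x ∧ 2 ≤ wt x := by
  set S := (Finset.range x).filter (fun j => Nat.testBit x j = true) with hS
  have hxS : ∑ j ∈ S, 2 ^ j = x := by
    rw [hS, Finset.sum_filter, sum_testBit, Nat.mod_eq_of_lt Nat.lt_two_pow_self]
  have hwt : wt x = S.card := by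
    conv_lhs => rw [← hxS]
    exact wt_sum_two_pow S
  -- Truncated subtraction is harmless, as `2 ^ j` is positive.
  have hinj : Function.Injective (fun j : ℕ => 2 ^ j - 1) := by
    intro i j hij
    have hi : 0 < 2 ^ i := Nat.two_pow_pos i
    have hj : 0 < 2 ^ j := Nat.two_pow_pos j
    have hij' : 2 ^ i - 1 = 2 ^ j - 1 := hij
    exact Nat.pow_right_injective le_rfl (show 2 ^ i = 2 ^ j by omega)
  have hnot : x - 1 ∉ S.image (fun j : ℕ => 2 ^ j - 1) := by
    intro h
    obtain ⟨j, -, hj⟩ := Finset.mem_image.1 h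
    have hpos : 0 < 2 ^ j := Nat.two_pow_pos j
    exact hp j (by omega)
  have hf : fM x = ∑ i ∈ insert (x - 1) (S.image (fun j : ℕ => 2 ^ j - 1)), 2 ^ i := by
    rw [Finset.sum_insert hnot, Finset.sum_image hinj.injOn, fM, hS, Finset.sum_filter]
  constructor
  · rw [hf, wt_sum_two_pow, Finset.card_insert_of_notMem hnot,
      Finset.card_image_of_injective _ hinj, hwt, add_comm]
  · rw [hwt]
    by_contra! hlt
    rcases (show S.card = 0 ∨ S.card = 1 by omega) with h | h
    · rw [Finset.card_eq_zero.1 h, Finset.sum_empty] at hxS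
      omega
    · obtain ⟨k, hk⟩ := Finset.card_eq_one.1 h
      rw [hk, Finset.sum_singleton] at hxS
      exact hp k hxS.symm

/-- Let `d` be the unique positive integer with `2^(d-1) ≤ a < 2^d`.  For every
`x ∈ M_a`, `wt(f(x)) = 1 + wt(x)`; in particular, since `wt(x) ≥ 2` for `x ∈ M_a`,
every element of `M_a' = f(M_a)` has Hamming weight at least `3`. -/
theorem wt_fM (a d : ℕ) (ha : 1 ≤ a) (hd : 1 ≤ d)
    (h1 : 2 ^ (d - 1) ≤ a) (h2 : a < 2 ^ d) :
    (∀ x ∈ Ma a, wt (fM x) = 1 + wt x ∧ 2 ≤ wt x) ∧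
      ∀ y ∈ fM '' Ma a, 3 ≤ wt y := by
  have key : ∀ x ∈ Ma a, wt (fM x) = 1 + wt x ∧ 2 ≤ wt x :=
    fun x hx => wt_fM_of_not_pow x hx.1 hx.2.2
  refine ⟨key, ?_⟩
  rintro y ⟨x, hx, rfl⟩
  have := key x hx
  omega
end

section
/- Let a ≥ 1 be an integer and let d be the unique positive integer with 2^{d-1} ≤ a < 2^d. For all distinct x, y ∈ M_a, wt(f(x) ⊕ f(y)) = 2 + wt(x ⊕ y); in particular wt(f(x) ⊕ f(y)) ≥ 3. -/
theorem wt_eq_card (n : ℕ) : wt n = n.bitIndices.toFinset.card := by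
  rw [List.toFinset_card_of_nodup Nat.bitIndices_nodup, wt, Nat.digits_two_eq_bits]
  induction n using Nat.binaryRec' with
  | zero => simp
  | bit b n h ih =>
    rw [Nat.bits_append_bit n b h]
    cases b
    · simp [ih]
    · simp [ih, Nat.add_comm 1 n.bitIndices.length]

theorem toFinset_bitIndices_xor (m n : ℕ) :
    (m ^^^ n).bitIndices.toFinset = symmDiff m.bitIndices.toFinset n.bitIndices.toFinset := by
  ext i
  simp only [List.mem_toFinset, Nat.mem_bitIndices, Nat.testBit_xor, Finset.mem_symmDiff]
  cases m.testBit i <;> cases n.testBit i <;> simp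

theorem two_pow_sub_one_injective : Function.Injective fun j : ℕ => 2 ^ j - 1 := by
  intro i j h
  have hi := Nat.one_le_two_pow (n := i)
  have hj := Nat.one_le_two_pow (n := j)
  exact Nat.pow_right_injective le_rfl (by simp only at h ⊢; omega)

theorem sub_one_notMem_image {x : ℕ} (hx : 1 ≤ x) (hp : ∀ k : ℕ, x ≠ 2 ^ k) (s : Finset ℕ) :
    x - 1 ∉ s.image fun j : ℕ => 2 ^ j - 1 := by
  intro h
  obtain ⟨j, -, hj⟩ := Finset.mem_image.1 h
  have h1 := Nat.one_le_two_pow (n := j)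
  exact hp j (by omega)

theorem toFinset_bitIndices_fM {x : ℕ} (hx : 1 ≤ x) (hp : ∀ k : ℕ, x ≠ 2 ^ k) :
    (fM x).bitIndices.toFinset =
      insert (x - 1) (x.bitIndices.toFinset.image fun j : ℕ => 2 ^ j - 1) := by
  -- Every digit position of `x` is below `x`, so the range in `fM` misses none.
  have hB : (Finset.range x).filter (fun j => x.testBit j) = x.bitIndices.toFinset := by
    ext j
    simp only [Finset.mem_filter, Finset.mem_range, List.mem_toFinset, Nat.mem_bitIndices,
      and_iff_right_iff_imp]
    exact fun h => j.lt_two_pow_self.trans_le (Nat.ge_two_pow_of_testBit h)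
  have hf : fM x =
      ∑ i ∈ insert (x - 1) (x.bitIndices.toFinset.image fun j : ℕ => 2 ^ j - 1), 2 ^ i := by
    rw [Finset.sum_insert (sub_one_notMem_image hx hp _),
      Finset.sum_image two_pow_sub_one_injective.injOn, fM, ← Finset.sum_filter, hB]
  rw [hf, Finset.toFinset_bitIndices_sum_two_pow]

/-- Let `d` be the unique positive integer with `2^(d-1) ≤ a < 2^d`.  For all
distinct `x, y ∈ M_a`, `wt(f(x) ⊕ f(y)) = 2 + wt(x ⊕ y)`; in particular
`wt(f(x) ⊕ f(y)) ≥ 3`. -/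
theorem wt_fM_xor (a d : ℕ) (ha : 1 ≤ a) (hd : 1 ≤ d)
    (h1 : 2 ^ (d - 1) ≤ a) (h2 : a < 2 ^ d) :
    ∀ x ∈ Ma a, ∀ y ∈ Ma a, x ≠ y →
      wt (fM x ^^^ fM y) = 2 + wt (x ^^^ y) ∧ 3 ≤ wt (fM x ^^^ fM y) := by
  rintro x ⟨hx, -, hpx⟩ y ⟨hy, -, hpy⟩ hxy
  have key : wt (fM x ^^^ fM y) = 2 + wt (x ^^^ y) := by
    rw [wt_eq_card, wt_eq_card, toFinset_bitIndices_xor, toFinset_bitIndices_xor,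
      toFinset_bitIndices_fM hx hpx, toFinset_bitIndices_fM hy hpy]
    have hxn := sub_one_notMem_image hx hpx
    have hyn := sub_one_notMem_image hy hpy
    have hne : x - 1 ≠ y - 1 := by omega
    generalize x.bitIndices.toFinset = A at *
    generalize y.bitIndices.toFinset = B at *
    have hS : symmDiff (insert (x - 1) (A.image fun j : ℕ => 2 ^ j - 1))
          (insert (y - 1) (B.image fun j : ℕ => 2 ^ j - 1)) =
        insert (x - 1) (insert (y - 1) ((symmDiff A B).image fun j : ℕ => 2 ^ j - 1)) := by
      rw [Finset.image_symmDiff _ _ two_pow_sub_one_injective]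
      have hxA := hxn A
      have hxB := hxn B
      have hyA := hyn A
      have hyB := hyn B
      generalize (A.image fun j : ℕ => 2 ^ j - 1) = A' at *
      generalize (B.image fun j : ℕ => 2 ^ j - 1) = B' at *
      ext i
      simp only [Finset.mem_symmDiff, Finset.mem_insert]
      grind
    rw [hS, Finset.card_insert_of_notMem, Finset.card_insert_of_notMem (hyn _),
      Finset.card_image_of_injective _ two_pow_sub_one_injective]
    · omega
    · rw [Finset.mem_insert, not_or]
      exact ⟨hne, hxn _⟩
  refine ⟨key, ?_⟩
  have hpos : 0 < wt (x ^^^ y) := by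
    rw [wt_eq_card, toFinset_bitIndices_xor, Finset.card_pos, Finset.nonempty_iff_ne_empty]
    intro h
    have h' := symmDiff_eq_bot.1 h
    apply hxy
    rw [← Finset.sum_toFinset_bitIndices_two_pow x, h', Finset.sum_toFinset_bitIndices_two_pow]
  omega
end

section
/- Let a ≥ 1 be an integer and let d be the unique positive integer with 2^{d-1} ≤ a < 2^d. For every k with 1 ≤ k ≤ a - d and all pairwise distinct y_1, …, y_k ∈ M_a, one has wt(f(y_1) ⊕ f(y_2) ⊕ … ⊕ f(y_k)) = k + wt(y_1 ⊕ y_2 ⊕ … ⊕ y_k). -/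
/-- The ones of `f(x)`. The leading term `2 ^ (x - 1)` causes no carry because `x` is not a
power of 2. -/
theorem testBit_fM {x : ℕ} (hx : 1 ≤ x) (hp : ∀ k : ℕ, x ≠ 2 ^ k) (i : ℕ) :
    (fM x).testBit i = true ↔ i = x - 1 ∨ ∃ j, x.testBit j = true ∧ 2 ^ j - 1 = i := by
  have hnot : x - 1 ∉ x.bitIndices.toFinset.image (fun j => 2 ^ j - 1) := by
    simp only [Finset.mem_image, not_exists, not_and]
    intro j _ h
    have hj := Nat.one_le_two_pow (n := j)
    exact hp j (by omega)
  have hfilter : (Finset.range x).filter (fun j => x.testBit j = true) =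
      x.bitIndices.toFinset := by
    ext j
    simp only [Finset.mem_filter, Finset.mem_range, List.mem_toFinset, Nat.mem_bitIndices,
      and_iff_right_iff_imp]
    intro h
    exact lt_of_lt_of_le Nat.lt_two_pow_self (Nat.ge_two_pow_of_testBit h)
  have hf : fM x = ∑ i ∈ insert (x - 1) (x.bitIndices.toFinset.image (fun j => 2 ^ j - 1)),
      2 ^ i := by
    rw [Finset.sum_insert hnot, Finset.sum_image two_pow_sub_one_injective.injOn, fM,
      ← Finset.sum_filter, hfilter]
  rw [← Nat.mem_bitIndices, ← List.mem_toFinset, hf, Finset.toFinset_bitIndices_sum_two_pow]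
  simp

theorem testBit_foldr_fM_pow (l : List ℕ) (hl : ∀ x ∈ l, 1 ≤ x ∧ ∀ k : ℕ, x ≠ 2 ^ k) (j : ℕ) :
    ((l.map fM).foldr (· ^^^ ·) 0).testBit (2 ^ j - 1) = (l.foldr (· ^^^ ·) 0).testBit j := by
  induction l with
  | nil => simp
  | cons x l ih =>
    obtain ⟨hx, hp⟩ := hl x (by simp)
    have key : (fM x).testBit (2 ^ j - 1) = x.testBit j := by
      rw [Bool.eq_iff_iff, testBit_fM hx hp]
      constructor
      · rintro (h | ⟨j', h, e⟩)
        · have hj := Nat.one_le_two_pow (n := j)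
          exact absurd (by omega) (hp j)
        · exact two_pow_sub_one_injective e ▸ h
      · exact fun h => Or.inr ⟨j, h, rfl⟩
    simp only [List.map_cons, List.foldr_cons, Nat.testBit_xor, key,
      ih fun y hy => hl y (List.mem_cons_of_mem _ hy)]

theorem testBit_foldr_fM_of_not_pow (l : List ℕ) (hn : l.Nodup)
    (hl : ∀ x ∈ l, 1 ≤ x ∧ ∀ k : ℕ, x ≠ 2 ^ k) (i : ℕ) (hi : ∀ k : ℕ, i + 1 ≠ 2 ^ k) :
    ((l.map fM).foldr (· ^^^ ·) 0).testBit i = decide (i + 1 ∈ l) := by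
  induction l with
  | nil => simp
  | cons x l ih =>
    obtain ⟨hx, hp⟩ := hl x (by simp)
    obtain ⟨hxl, hn'⟩ := List.nodup_cons.1 hn
    have key : (fM x).testBit i = decide (i + 1 = x) := by
      rw [Bool.eq_iff_iff, testBit_fM hx hp, decide_eq_true_iff]
      constructor
      · rintro (h | ⟨j, -, e⟩)
        · omega
        · have hj := Nat.one_le_two_pow (n := j)
          exact absurd (by omega) (hi j)
      · intro h
        left
        omega
    simp only [List.map_cons, List.foldr_cons, Nat.testBit_xor, key,
      ih hn' fun y hy => hl y (List.mem_cons_of_mem _ hy)]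
    by_cases h : i + 1 = x
    · subst h
      simp [hxl]
    · simp [h]

theorem wt_foldr_fM (l : List ℕ) (hn : l.Nodup)
    (hl : ∀ x ∈ l, 1 ≤ x ∧ ∀ k : ℕ, x ≠ 2 ^ k) :
    wt ((l.map fM).foldr (· ^^^ ·) 0) = l.length + wt (l.foldr (· ^^^ ·) 0) := by
  have hset : ((l.map fM).foldr (· ^^^ ·) 0).bitIndices.toFinset =
      l.toFinset.image (· - 1) ∪
        (l.foldr (· ^^^ ·) 0).bitIndices.toFinset.image (fun j => 2 ^ j - 1) := by
    ext i
    simp only [List.mem_toFinset, Nat.mem_bitIndices, Finset.mem_union, Finset.mem_image]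
    by_cases hi : ∃ j : ℕ, i + 1 = 2 ^ j
    · obtain ⟨j, hj⟩ := hi
      obtain rfl : i = 2 ^ j - 1 := by omega
      rw [testBit_foldr_fM_pow l hl]
      constructor
      · exact fun h => Or.inr ⟨j, h, rfl⟩
      · rintro (⟨x, hx, e⟩ | ⟨j', h, e⟩)
        · have := (hl x hx).1
          exact absurd (by omega) ((hl x hx).2 j)
        · exact two_pow_sub_one_injective e ▸ h
    · push Not at hi
      rw [testBit_foldr_fM_of_not_pow l hn hl i hi, decide_eq_true_iff]
      constructor
      · exact fun h => Or.inl ⟨i + 1, h, rfl⟩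
      · rintro (⟨x, hx, e⟩ | ⟨j, -, e⟩)
        · have := (hl x hx).1
          obtain rfl : x = i + 1 := by omega
          exact hx
        · have hj := Nat.one_le_two_pow (n := j)
          exact absurd (by omega) (hi j)
  have hdisj : Disjoint (l.toFinset.image (· - 1))
      ((l.foldr (· ^^^ ·) 0).bitIndices.toFinset.image (fun j => 2 ^ j - 1)) := by
    rw [Finset.disjoint_left]
    simp only [Finset.mem_image, List.mem_toFinset]
    rintro i ⟨x, hx, e⟩ ⟨j, -, e'⟩
    have := (hl x hx).1
    have hj := Nat.one_le_two_pow (n := j)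
    exact (hl x hx).2 j (by omega)
  rw [wt_eq_card, wt_eq_card, hset, Finset.card_union_of_disjoint hdisj,
    Finset.card_image_of_injective _ two_pow_sub_one_injective, Finset.card_image_of_injOn,
    List.toFinset_card_of_nodup hn]
  intro x hx y hy h
  have h1 := (hl x (by simpa using hx)).1
  have h2 := (hl y (by simpa using hy)).1
  simp only at h
  omega

/-- Let `d` be the unique positive integer with `2^(d-1) ≤ a < 2^d`.  For every
`k` with `1 ≤ k ≤ a - d` and all pairwise distinct `y_1, …, y_k ∈ M_a`, one has
`wt(f(y_1) ⊕ ⋯ ⊕ f(y_k)) = k + wt(y_1 ⊕ ⋯ ⊕ y_k)`. -/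
theorem wt_fM_xor_list (a d : ℕ) (ha : 1 ≤ a) (hd : 1 ≤ d)
    (h1 : 2 ^ (d - 1) ≤ a) (h2 : a < 2 ^ d)
    (k : ℕ) (hk1 : 1 ≤ k) (hk2 : k ≤ a - d)
    (y : Fin k → ℕ) (hy : Function.Injective y) (hyM : ∀ i, y i ∈ Ma a) :
    wt ((List.ofFn fun i => fM (y i)).foldr (· ^^^ ·) 0) =
      k + wt ((List.ofFn y).foldr (· ^^^ ·) 0) := by
  have h := wt_foldr_fM (List.ofFn y) (List.nodup_ofFn.2 hy) (by
    intro x hx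
    obtain ⟨i, rfl⟩ := (List.mem_ofFn' y x).1 hx
    exact ⟨(hyM i).1, (hyM i).2.2⟩)
  rw [List.map_ofFn, List.length_ofFn] at h
  exact h
end

section
/- Let a ≥ 3 be an integer and let d be the unique positive integer with 2^{d-1} ≤ a < 2^d. Then the minimum Hamming weight of the nonzero elements of S^a is exactly 3; that is, every nonzero element of S^a has Hamming weight at least 3, and some element of S^a (namely 7 = f(3)) has Hamming weight exactly 3. -/
/-- `S^a`: the 𝔽₂-linear span of `M_a' = f(M_a)` under bitwise XOR, i.e. the set
of all XORs of (finite, duplicate-free) collections of elements of `M_a'`, with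
the empty XOR equal to `0`. -/
def Sa (a : ℕ) : Set ℕ :=
  {s | ∃ l : List ℕ, l.Nodup ∧ (∀ x ∈ l, x ∈ fM '' Ma a) ∧
        s = l.foldr (· ^^^ ·) 0}

/-- The Hamming syndrome of `n`, read off its bits at positions below `N`: the XOR of `i + 1`
over all `i < N` such that bit `i` of `n` is set. -/
def syn : ℕ → ℕ → ℕ
  | 0, _ => 0
  | N + 1, n => syn N n ^^^ (if n.testBit N then N + 1 else 0)

lemma syn_zero (N : ℕ) : syn N 0 = 0 := by
  induction N with
  | zero => rfl
  | succ N ih => simp [syn, ih]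

lemma syn_xor (N m n : ℕ) : syn N (m ^^^ n) = syn N m ^^^ syn N n := by
  induction N with
  | zero => simp [syn]
  | succ N ih =>
    have h : (if (m ^^^ n).testBit N then N + 1 else 0) =
        (if m.testBit N then N + 1 else 0) ^^^ (if n.testBit N then N + 1 else 0) := by
      rw [Nat.testBit_xor]
      cases m.testBit N <;> cases n.testBit N <;> simp
    simp only [syn, ih, h]
    ac_rfl

lemma syn_two_pow (N i : ℕ) : syn N (2 ^ i) = if i < N then i + 1 else 0 := by
  induction N with
  | zero => rfl
  | succ N ih =>
    rw [syn, ih, Nat.testBit_two_pow]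
    rcases lt_trichotomy i N with h | h | h
    · simp [h, h.ne, h.trans (Nat.lt_succ_self N)]
    · simp [h]
    · simp [h.ne', h.not_gt, show ¬ i < N + 1 by omega]

lemma add_two_pow_eq_xor_s9 (n i : ℕ) (h : n.testBit i = false) : n + 2 ^ i = n ^^^ 2 ^ i := by
  induction i generalizing n with
  | zero =>
    have h0 : n % 2 = 0 := by simpa using h
    have := Nat.xor_one_of_even (Nat.even_iff.2 h0)
    simpa using this.symm
  | succ i ih =>
    rw [Nat.testBit_succ] at h
    have := ih _ h
    apply Nat.eq_of_testBit_eq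
    intro j
    cases j with
    | zero => simp [pow_succ, Nat.add_mod]
    | succ j =>
      rw [Nat.testBit_succ, Nat.testBit_xor, Nat.testBit_succ, Nat.testBit_succ, ← Nat.testBit_xor,
        show (n + 2 ^ (i + 1)) / 2 = n / 2 + 2 ^ i by omega,
        show 2 ^ (i + 1) / 2 = 2 ^ i by omega, this]

lemma mod_two_pow_succ_eq (x r : ℕ) :
    x % 2 ^ (r + 1) = x % 2 ^ r + if x.testBit r then 2 ^ r else 0 := by
  rw [Nat.mod_pow_succ, Nat.testBit_eq_decide_div_mod_eq]
  rcases Nat.mod_two_eq_zero_or_one (x / 2 ^ r) with h | h <;> simp [h]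

/-- The partial sums `s_r` of the `2 ^ (2 ^ j - 1)` over the set bits `j < r` of `x`: all bits of
`s_r` sit at positions `2 ^ j - 1`, so no carry occurs when the next term or `2 ^ (x - 1)` is
added, and the syndrome of `s_r` is `x` truncated to its lowest `r` bits. -/
lemma partialSum_spec (N x : ℕ) (hx : x ≤ N) (r : ℕ) :
    (∀ i, (∑ j ∈ Finset.range r, if Nat.testBit x j then 2 ^ (2 ^ j - 1) else 0).testBit i = true →
      ∃ j < r, i + 1 = 2 ^ j) ∧
    syn N (∑ j ∈ Finset.range r, if Nat.testBit x j then 2 ^ (2 ^ j - 1) else 0) = x % 2 ^ r := by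
  induction r with
  | zero => simp [syn_zero, Nat.mod_one]
  | succ r ih =>
    obtain ⟨ih1, ih2⟩ := ih
    rw [Finset.sum_range_succ]
    set s := ∑ j ∈ Finset.range r, if Nat.testBit x j then 2 ^ (2 ^ j - 1) else 0
    have hp : 1 ≤ 2 ^ r := Nat.one_le_two_pow
    cases hb : x.testBit r with
    | false =>
      refine ⟨fun i hi => ?_, ?_⟩
      · obtain ⟨j, hj, e⟩ := ih1 i (by simpa using hi)
        exact ⟨j, by omega, e⟩
      · simp [ih2, mod_two_pow_succ_eq, hb]
    | true =>
      have hs : s.testBit (2 ^ r - 1) = false := by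
        by_contra hc
        obtain ⟨j, hj, e⟩ := ih1 _ (by simpa using hc)
        have := Nat.pow_lt_pow_right (a := 2) (by norm_num) hj
        omega
      have hle : 2 ^ r ≤ x := Nat.ge_two_pow_of_testBit hb
      simp only [if_true]
      rw [add_two_pow_eq_xor_s9 _ _ hs]
      refine ⟨fun i hi => ?_, ?_⟩
      · rw [Nat.testBit_xor, Nat.testBit_two_pow] at hi
        by_cases hir : 2 ^ r - 1 = i
        · exact ⟨r, by omega, by omega⟩
        · obtain ⟨j, hj, e⟩ := ih1 i (by simpa [hir] using hi)
          exact ⟨j, by omega, e⟩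
      · rw [syn_xor, ih2, syn_two_pow, if_pos (by omega), Nat.sub_add_cancel hp,
          mod_two_pow_succ_eq, hb, ← add_two_pow_eq_xor_s9 _ _ (by simp [Nat.testBit_mod_two_pow])]
        simp

/-- Generators have zero syndrome: the term `2 ^ (x - 1)` contributes `x`, and the remaining terms
contribute the XOR of the powers of two occurring in `x`, which is again `x`. That `x` is not a
power of two ensures that `2 ^ (x - 1)` does not collide with another term. -/
lemma syn_fM (N a x : ℕ) (ha : a ≤ N) (hx : x ∈ Ma a) : syn N (fM x) = 0 := by
  obtain ⟨h1, h2, h3⟩ := hx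
  obtain ⟨hA, hB⟩ := partialSum_spec N x (h2.trans ha) x
  rw [fM, add_comm, add_two_pow_eq_xor_s9, syn_xor, hB, syn_two_pow, if_pos (by omega),
    Nat.mod_eq_of_lt Nat.lt_two_pow_self, Nat.sub_add_cancel h1, Nat.xor_self]
  by_contra hc
  obtain ⟨j, -, e⟩ := hA _ (by simpa using hc)
  exact h3 j (by omega)

lemma syn_of_mem_Sa (N a s : ℕ) (ha : a ≤ N) (hs : s ∈ Sa a) : syn N s = 0 := by
  obtain ⟨l, -, hl, rfl⟩ := hs
  induction l with
  | nil => exact syn_zero N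
  | cons y l ih =>
    obtain ⟨x, hx, rfl⟩ := hl y (by simp)
    rw [List.foldr_cons, syn_xor, syn_fM N a x ha hx,
      ih fun z hz => hl z (List.mem_cons_of_mem _ hz), Nat.xor_self]

lemma wt_rec (n : ℕ) (hn : n ≠ 0) : wt n = n % 2 + wt (n / 2) := by
  rw [wt, Nat.digits_def' (by norm_num) (Nat.pos_of_ne_zero hn), List.sum_cons, wt]

lemma eq_of_wt_lt_three (n : ℕ) :
    (wt n = 0 → n = 0) ∧ (wt n = 1 → ∃ i, n = 2 ^ i) ∧
      (wt n = 2 → ∃ i j, i < j ∧ n = 2 ^ i + 2 ^ j) := by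
  induction n using Nat.strong_induction_on with
  | _ n ih =>
    rcases Nat.eq_zero_or_pos n with rfl | hn
    · simp [wt]
    obtain ⟨h0, h1, h2⟩ := ih (n / 2) (by omega)
    rw [wt_rec n hn.ne']
    have hm : n % 2 = 0 ∨ n % 2 = 1 := by omega
    refine ⟨fun h => ?_, fun h => ?_, fun h => ?_⟩
    · have := h0 (by omega)
      omega
    · rcases hm with hm | hm
      · obtain ⟨i, e⟩ := h1 (by omega)
        exact ⟨i + 1, by omega⟩
      · have := h0 (by omega)
        exact ⟨0, by omega⟩
    · rcases hm with hm | hm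
      · obtain ⟨i, j, hij, e⟩ := h2 (by omega)
        exact ⟨i + 1, j + 1, by omega, by omega⟩
      · obtain ⟨i, e⟩ := h1 (by omega)
        exact ⟨0, i + 1, by omega, by omega⟩

/-- For `a ≥ 3` (with `d` the unique positive integer such that `2^(d-1) ≤ a < 2^d`),
the minimum Hamming weight of the nonzero elements of `S^a` is exactly `3`: every
nonzero element of `S^a` has Hamming weight at least `3`, and the element
`7 = f(3) ∈ S^a` has Hamming weight exactly `3`. -/
theorem Sa_min_weight_eq_three (a d : ℕ) (ha : 3 ≤ a) (hd : 1 ≤ d)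
    (h1 : 2 ^ (d - 1) ≤ a) (h2 : a < 2 ^ d) :
    (∀ s ∈ Sa a, s ≠ 0 → 3 ≤ wt s) ∧ fM 3 = 7 ∧ (7 : ℕ) ∈ Sa a ∧ wt 7 = 3 := by
  have hf : fM 3 = 7 := by decide
  refine ⟨fun s hs hs0 => ?_, hf, ⟨[7], by simp, ?_, by simp⟩, by simp [wt]⟩
  · by_contra hlt
    -- The window `a + s` covers both the bits of the generators and those of `s`.
    have hsyn := syn_of_mem_Sa (a + s) a s (by omega) hs
    obtain ⟨h0, h1, h2⟩ := eq_of_wt_lt_three s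
    have hcases : wt s = 0 ∨ wt s = 1 ∨ wt s = 2 := by omega
    rcases hcases with h | h | h
    · exact hs0 (h0 h)
    · obtain ⟨i, e⟩ := h1 h
      have hi : i < 2 ^ i := Nat.lt_two_pow_self
      rw [e, syn_two_pow, if_pos (by omega)] at hsyn
      omega
    · obtain ⟨i, j, hij, e⟩ := h2 h
      have hi : i < 2 ^ i := Nat.lt_two_pow_self
      have hj : j < 2 ^ j := Nat.lt_two_pow_self
      have hx : s = 2 ^ i ^^^ 2 ^ j := by
        rw [e, add_two_pow_eq_xor_s9 _ _ (by simp [hij.ne])]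
      have hsyn' : syn (a + s) (2 ^ i ^^^ 2 ^ j) = 0 := hx ▸ hsyn
      rw [syn_xor, syn_two_pow, syn_two_pow, if_pos (by omega), if_pos (by omega),
        Nat.xor_eq_zero_iff] at hsyn'
      omega
  · intro x hx
    obtain rfl : x = 7 := by simpa using hx
    refine ⟨3, ⟨by norm_num, ha, fun k hk => ?_⟩, hf⟩
    rcases k with _ | _ | k
    · simp at hk
    · simp at hk
    · rw [pow_succ] at hk
      omega
end

section
/- Let a ≥ 1 be an integer and let d be the unique positive integer with 2^{d-1} ≤ a < 2^d. The radix-2 representation vectors of the elements of M_a' are linearly independent over 𝔽_2 (equivalently, the XOR of any nonempty collection of distinct elements of M_a' is nonzero); consequently |S^a| = 2^{a-d}. -/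
theorem two_pow_le_fM (x : ℕ) : 2 ^ (x - 1) ≤ fM x := Nat.le_add_right _ _

theorem fM_lt_two_pow {a x : ℕ} (hx : x ∈ Ma a) : fM x < 2 ^ x := by
  obtain ⟨hx1, -, hx2⟩ := hx
  have hsum : (∑ j ∈ Finset.range x, if Nat.testBit x j then 2 ^ (2 ^ j - 1) else 0)
      < 2 ^ (x - 1) := by
    -- a sum of powers of `2` with distinct exponents `2 ^ j - 1 < x - 1`
    rw [← Finset.sum_filter]
    have hinj : Set.InjOn (fun j : ℕ => 2 ^ j - 1)
        ((Finset.range x).filter fun j => Nat.testBit x j = true) := by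
      intro i _ j _ hij
      have hi := Nat.one_le_two_pow (n := i)
      have hj := Nat.one_le_two_pow (n := j)
      simp only at hij
      exact Nat.pow_right_injective le_rfl (show 2 ^ i = 2 ^ j by omega)
    rw [← Finset.sum_image (f := fun i => 2 ^ i) hinj]
    apply Nat.geomSum_lt le_rfl
    intro k hk
    simp only [Finset.mem_image, Finset.mem_filter] at hk
    obtain ⟨j, ⟨-, hj⟩, rfl⟩ := hk
    have h1 := Nat.ge_two_pow_of_testBit hj
    have h2 := hx2 j
    have h3 := Nat.one_le_two_pow (n := j)
    omega
  have h2 : 2 ^ x = 2 ^ (x - 1) + 2 ^ (x - 1) := by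
    rw [← two_mul, ← pow_succ']
    congr 1
    omega
  unfold fM
  omega

theorem foldr_xor_lt {n : ℕ} (l : List ℕ) (h : ∀ y ∈ l, y < 2 ^ n) :
    l.foldr (· ^^^ ·) 0 < 2 ^ n := by
  induction l with
  | nil => simp
  | cons y l ih =>
    simp only [List.mem_cons, forall_eq_or_imp] at h
    exact Nat.xor_lt_two_pow h.1 (ih h.2)

theorem le_of_fM_lt {a x y : ℕ} (hx : x ∈ Ma a) (h : fM y < fM x) :
    y ≤ x := by
  by_contra! hlt
  have h1 := fM_lt_two_pow hx
  have h2 := two_pow_le_fM y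
  have h3 : 2 ^ x ≤ 2 ^ (y - 1) := Nat.pow_le_pow_right two_pos (by omega)
  omega

/-- The members other than the largest one `fM x` are all below `2 ^ (x - 1)`, hence so is their XOR,
which therefore cannot cancel `fM x`. -/
theorem foldr_xor_ne_zero {a : ℕ} (l : List ℕ) (hl : l.Nodup)
    (hmem : ∀ x ∈ l, x ∈ fM '' Ma a) (hne : l ≠ []) : l.foldr (· ^^^ ·) 0 ≠ 0 := by
  obtain ⟨m, hm, hmax⟩ := l.toFinset.exists_max_image id (by simpa using hne)
  simp only [List.mem_toFinset, id] at hm hmax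
  obtain ⟨x, hx, rfl⟩ := hmem m hm
  rw [(List.perm_cons_erase hm).foldr_eq, List.foldr_cons]
  have hlt : (l.erase (fM x)).foldr (· ^^^ ·) 0 < 2 ^ (x - 1) := by
    apply foldr_xor_lt
    intro y hy
    rw [hl.mem_erase_iff] at hy
    obtain ⟨z, hz, rfl⟩ := hmem y hy.2
    have hzx := le_of_fM_lt hx (lt_of_le_of_ne (hmax _ hy.2) hy.1)
    have hne' : z ≠ x := fun h => hy.1 (by rw [h])
    exact (fM_lt_two_pow hz).trans_le (Nat.pow_le_pow_right two_pos (by omega))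
  intro h0
  rw [Nat.xor_eq_zero_iff] at h0
  have := two_pow_le_fM x
  omega

theorem fM_injOn (a : ℕ) : Set.InjOn fM (Ma a) := by
  have key : ∀ x ∈ Ma a, Nat.log 2 (fM x) = x - 1 := by
    intro x hx
    apply Nat.log_eq_of_pow_le_of_lt_pow (two_pow_le_fM x)
    rw [Nat.sub_add_cancel hx.1]
    exact fM_lt_two_pow hx
  intro x hx y hy hxy
  have h1 := key x hx
  have h2 := key y hy
  have h3 := hx.1
  have h4 := hy.1
  rw [hxy] at h1
  omega

/-- The XOR of the elements of a finite set of naturals. -/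
def xorSum (s : Finset ℕ) : ℕ := s.fold (· ^^^ ·) 0 id

theorem xorSum_toFinset (l : List ℕ) (hl : l.Nodup) :
    xorSum l.toFinset = l.foldr (· ^^^ ·) 0 := by
  induction l with
  | nil => rfl
  | cons y l ih =>
    rw [List.nodup_cons] at hl
    have hy : y ∉ l.toFinset := by simpa using hl.1
    rw [List.toFinset_cons, List.foldr_cons, ← ih hl.2]
    exact Finset.fold_insert hy

theorem xorSum_union {s t : Finset ℕ} (h : Disjoint s t) :
    xorSum (s ∪ t) = xorSum s ^^^ xorSum t := by
  have := Finset.fold_disjUnion (op := ((· ^^^ ·) : ℕ → ℕ → ℕ)) (f := id) (b₁ := 0) (b₂ := 0) h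
  simpa [xorSum] using this

theorem xorSum_ne_zero {a : ℕ} {s : Finset ℕ} (hs : (s : Set ℕ) ⊆ fM '' Ma a)
    (hne : s.Nonempty) : xorSum s ≠ 0 := by
  rw [← Finset.toList_toFinset s, xorSum_toFinset _ s.nodup_toList]
  exact foldr_xor_ne_zero _ s.nodup_toList (fun x hx => hs (by simpa using hx))
    (by simpa using hne.ne_empty)

theorem xorSum_injOn (a : ℕ) : Set.InjOn xorSum {s | (s : Set ℕ) ⊆ fM '' Ma a} := by
  intro s hs t ht hst
  have e1 : xorSum s = xorSum (s \ t) ^^^ xorSum (s ∩ t) := by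
    rw [← xorSum_union (Finset.disjoint_sdiff_inter s t), Finset.sdiff_union_inter]
  have e2 : xorSum t = xorSum (t \ s) ^^^ xorSum (s ∩ t) := by
    rw [Finset.inter_comm, ← xorSum_union (Finset.disjoint_sdiff_inter t s),
      Finset.sdiff_union_inter]
  rw [e1, e2, Nat.xor_left_inj] at hst
  by_contra hne
  have hd : Disjoint (s \ t) (t \ s) := disjoint_sdiff_sdiff
  refine xorSum_ne_zero (a := a) (s := s \ t ∪ t \ s) ?_ ?_ ?_
  · intro x hx
    simp only [Finset.coe_union, Finset.coe_sdiff, Set.mem_union, Set.mem_sdiff] at hx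
    exact hx.elim (fun h => hs h.1) (fun h => ht h.1)
  · rw [Finset.nonempty_iff_ne_empty]
    exact fun h => hne (symmDiff_eq_bot.mp h)
  · rw [xorSum_union hd, hst, Nat.xor_self]

/-- `M_a` as a finite set: `[1, a]` without `2 ^ 0, …, 2 ^ (d - 1)`. -/
theorem coe_Icc_sdiff_image {a d : ℕ} (h2 : a < 2 ^ d) :
    ((Finset.Icc 1 a \ (Finset.range d).image (2 ^ ·) : Finset ℕ) : Set ℕ) = Ma a := by
  ext x
  simp only [Finset.coe_sdiff, Finset.coe_Icc, Finset.coe_image, Finset.coe_range, Set.mem_sdiff,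
    Set.mem_Icc, Set.mem_image, Set.mem_Iio, Ma, Set.mem_ofPred_eq, not_exists, not_and, and_assoc]
  refine and_congr_right fun _ => and_congr_right fun hxa => ⟨fun h k hk => ?_, ?_⟩
  · refine h k ?_ hk.symm
    exact (Nat.pow_lt_pow_iff_right one_lt_two).mp (by omega : 2 ^ k < 2 ^ d)
  · exact fun h k _ hk => h k hk.symm

theorem card_Icc_sdiff_image {a d : ℕ} (h1 : 2 ^ (d - 1) ≤ a) :
    (Finset.Icc 1 a \ (Finset.range d).image (2 ^ ·)).card = a - d := by
  rw [Finset.card_sdiff_of_subset, Nat.card_Icc, Finset.card_image_of_injective,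
    Finset.card_range, Nat.add_sub_cancel]
  · exact Nat.pow_right_injective le_rfl
  · intro x hx
    simp only [Finset.mem_image, Finset.mem_range] at hx
    obtain ⟨k, hk, rfl⟩ := hx
    exact Finset.mem_Icc.mpr ⟨Nat.one_le_two_pow,
      (Nat.pow_le_pow_right two_pos (by omega)).trans h1⟩

theorem Sa_eq_image_powerset {a : ℕ} (F : Finset ℕ) (hF : (F : Set ℕ) = fM '' Ma a) :
    Sa a = (F.powerset.image xorSum : Finset ℕ) := by
  ext s
  simp only [Sa, Set.mem_ofPred_eq, Finset.coe_image, Set.mem_image, Finset.mem_coe,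
    Finset.mem_powerset, ← hF]
  constructor
  · rintro ⟨l, hl, hmem, rfl⟩
    exact ⟨l.toFinset, fun x hx => hmem x (by simpa using hx), xorSum_toFinset l hl⟩
  · rintro ⟨t, ht, rfl⟩
    refine ⟨t.toList, t.nodup_toList, fun x hx => ht (by simpa using hx), ?_⟩
    rw [← xorSum_toFinset _ t.nodup_toList, Finset.toList_toFinset]

/-- Let `d` be the unique positive integer with `2^(d-1) ≤ a < 2^d`.  The radix-2
representation vectors of the elements of `M_a'` are linearly independent over 𝔽₂:
the XOR of any nonempty collection of distinct elements of `M_a'` is nonzero.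
Consequently `|S^a| = 2^(a-d)`. -/
theorem Ma'_linearIndependent_and_card_Sa (a d : ℕ) (ha : 1 ≤ a) (hd : 1 ≤ d)
    (h1 : 2 ^ (d - 1) ≤ a) (h2 : a < 2 ^ d) :
    (∀ l : List ℕ, l.Nodup → (∀ x ∈ l, x ∈ fM '' Ma a) → l ≠ [] →
        l.foldr (· ^^^ ·) 0 ≠ 0) ∧
      (Sa a).ncard = 2 ^ (a - d) := by
  refine ⟨foldr_xor_ne_zero, ?_⟩
  have hM := coe_Icc_sdiff_image h2
  have hF : (((Finset.Icc 1 a \ (Finset.range d).image (2 ^ ·)).image fM : Finset ℕ) : Set ℕ)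
      = fM '' Ma a := by
    rw [Finset.coe_image, hM]
  rw [Sa_eq_image_powerset _ hF, Set.ncard_coe_finset, Finset.card_image_of_injOn,
    Finset.card_powerset, Finset.card_image_of_injOn, card_Icc_sdiff_image h1]
  · rw [hM]
    exact fM_injOn a
  · refine (xorSum_injOn a).mono fun s hs => ?_
    rw [Set.mem_ofPred_eq, ← hF]
    exact Finset.coe_subset.mpr (Finset.mem_powerset.mp hs)
end

section
/- Let a and d be positive integers with 2^{d-1} ≤ a < 2^d. Then there exists a partition of the set {0, 1, …, 2^a - 1} into 2^d subsets C_0, C_1, …, C_{2^d - 1}, each containing exactly 2^{a-d} elements, such that for each j and any two distinct elements x, y ∈ C_j, one has N_x^(a) ∩ N_y^(a) = ∅. -/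
/-- The Hamming syndrome: the XOR of `j + 1` over the positions `j < n` where `x` has bit `1`. -/
def syndrome : ℕ → ℕ → ℕ
  | 0, _ => 0
  | n + 1, x => syndrome n x ^^^ (if x.testBit n then n + 1 else 0)

theorem syndrome_xor (n x y : ℕ) : syndrome n (x ^^^ y) = syndrome n x ^^^ syndrome n y := by
  induction n with
  | zero => simp [syndrome]
  | succ n ih =>
    simp only [syndrome, ih, Nat.testBit_xor]
    cases x.testBit n <;> cases y.testBit n <;> simp
    · ac_rfl
    · ac_rfl
    · rw [show syndrome n x ^^^ (n + 1) ^^^ (syndrome n y ^^^ (n + 1))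
        = syndrome n x ^^^ syndrome n y ^^^ ((n + 1) ^^^ (n + 1)) by ac_rfl]
      simp

theorem syndrome_zero (n : ℕ) : syndrome n 0 = 0 := by
  induction n with
  | zero => rfl
  | succ n ih => simp [syndrome, ih]

theorem syndrome_two_pow (n j : ℕ) : syndrome n (2 ^ j) = if j < n then j + 1 else 0 := by
  induction n with
  | zero => simp [syndrome]
  | succ n ih =>
    simp only [syndrome, ih, Nat.testBit_two_pow]
    rcases lt_trichotomy j n with h | h | h
    · simp [h, h.ne, Nat.lt_succ_of_lt h]
    · simp [h]
    · simp [h.ne', h.not_gt, show ¬ j < n + 1 by omega]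

theorem syndrome_lt {n d : ℕ} (x : ℕ) (h : n < 2 ^ d) : syndrome n x < 2 ^ d := by
  induction n with
  | zero => simp [syndrome]
  | succ n ih =>
    refine Nat.xor_lt_two_pow (ih (by omega)) ?_
    split_ifs <;> omega

theorem exists_syndrome_eq {a d : ℕ} (h1 : 2 ^ (d - 1) ≤ a) {k : ℕ} (hk : k ≤ d) :
    ∀ s < 2 ^ k, ∃ t < 2 ^ a, syndrome a t = s := by
  induction k with
  | zero =>
    intro s hs
    exact ⟨0, by positivity, by rw [syndrome_zero]; simp at hs; omega⟩
  | succ k ih =>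
    intro s hs
    by_cases hsk : s < 2 ^ k
    · exact ih (by omega) s hsk
    -- Clear the leading bit `2 ^ k`, which is the syndrome of `2 ^ (2 ^ k - 1)`.
    have hlt : s ^^^ 2 ^ k < 2 ^ k := by
      obtain ⟨r, rfl⟩ := Nat.exists_eq_add_of_le (not_lt.mp hsk)
      have hr : r < 2 ^ k := by rw [pow_succ] at hs; omega
      suffices (2 ^ k + r) ^^^ 2 ^ k = r by rwa [this]
      have h := Nat.two_pow_add_eq_or_of_lt hr 1
      rw [mul_one] at h
      apply Nat.eq_of_testBit_eq
      intro i
      rw [h]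
      simp only [Nat.testBit_or, Nat.testBit_xor, Nat.testBit_two_pow]
      by_cases hi : k = i
      · subst hi
        simp [Nat.testBit_lt_two_pow hr]
      · simp [hi]
    obtain ⟨t, ht, hts⟩ := ih (by omega) _ hlt
    have hpos : 0 < 2 ^ k := by positivity
    have hka : 2 ^ k ≤ a := le_trans (Nat.pow_le_pow_right (by norm_num) (by omega)) h1
    refine ⟨t ^^^ 2 ^ (2 ^ k - 1),
      Nat.xor_lt_two_pow ht (Nat.pow_lt_pow_right (by norm_num) (by omega)), ?_⟩
    rw [syndrome_xor, hts, syndrome_two_pow, if_pos (by omega), Nat.sub_add_cancel hpos,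
      Nat.xor_assoc, Nat.xor_self, Nat.xor_zero]

/-- An element of `N_x^(a)` is `x ⊕ u` for an error `u` that is determined by its syndrome. -/
theorem exists_error_of_mem_Nset {a x z : ℕ} (h : z ∈ Nset a x) :
    ∃ u, z = x ^^^ u ∧ u = if syndrome a u = 0 then 0 else 2 ^ (syndrome a u - 1) := by
  rcases h with h | ⟨j, hj, rfl⟩
  · exact ⟨0, by simpa using h, by simp [syndrome_zero]⟩
  · exact ⟨2 ^ j, rfl, by simp [syndrome_two_pow, hj]⟩

theorem Nset_inter_eq_empty {a x y : ℕ} (hs : syndrome a x = syndrome a y) (hxy : x ≠ y) :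
    Nset a x ∩ Nset a y = ∅ := by
  rw [Set.eq_empty_iff_forall_notMem]
  rintro z ⟨hx, hy⟩
  obtain ⟨u, hu, hu'⟩ := exists_error_of_mem_Nset hx
  obtain ⟨v, hv, hv'⟩ := exists_error_of_mem_Nset hy
  have h := congrArg (syndrome a) (hu.symm.trans hv)
  rw [syndrome_xor, syndrome_xor, hs, Nat.xor_right_inj] at h
  have huv : u = v := by rw [hu', hv', h]
  rw [hu, huv, Nat.xor_left_inj] at hv
  exact hxy hv

/-- Let `a` and `d` be positive integers with `2^(d-1) ≤ a < 2^d`.  Then there is a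
partition of `{0, 1, …, 2^a - 1}` into `2^d` subsets `C_0, …, C_{2^d - 1}`, each of
cardinality `2^(a-d)`, such that for each `j` and any two distinct `x, y ∈ C_j`,
`N_x^(a) ∩ N_y^(a) = ∅`. -/
theorem exists_partition_nonintersecting (a d : ℕ) (ha : 1 ≤ a) (hd : 1 ≤ d)
    (h1 : 2 ^ (d - 1) ≤ a) (h2 : a < 2 ^ d) :
    ∃ C : Fin (2 ^ d) → Finset ℕ,
      (∀ j k, j ≠ k → Disjoint (C j) (C k)) ∧
      (Finset.univ.biUnion C = Finset.range (2 ^ a)) ∧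
      (∀ j, (C j).card = 2 ^ (a - d)) ∧
      (∀ j, ∀ x ∈ C j, ∀ y ∈ C j, x ≠ y → Nset a x ∩ Nset a y = ∅) := by
  let F : ℕ → Finset ℕ := fun s => (Finset.range (2 ^ a)).filter fun x => syndrome a x = s
  have hdisj : ∀ j k : Fin (2 ^ d), j ≠ k → Disjoint (F j) (F k) := by
    intro j k hjk
    rw [Finset.disjoint_left]
    intro x hx hx'
    simp only [F, Finset.mem_filter] at hx hx'
    exact hjk (Fin.ext (hx.2.symm.trans hx'.2))
  have hcover : (Finset.univ : Finset (Fin (2 ^ d))).biUnion (fun j => F j)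
      = Finset.range (2 ^ a) := by
    ext x
    simp only [F, Finset.mem_biUnion, Finset.mem_univ, true_and, Finset.mem_filter]
    exact ⟨fun ⟨_, hx, _⟩ => hx, fun hx => ⟨⟨_, syndrome_lt x h2⟩, hx, rfl⟩⟩
  have hcard : ∀ j : Fin (2 ^ d), (F j).card = (F 0).card := by
    intro j
    obtain ⟨t, ht, hts⟩ := exists_syndrome_eq h1 le_rfl j j.2
    refine Finset.card_bij' (fun x _ => x ^^^ t) (fun x _ => x ^^^ t) ?_ ?_ ?_ ?_
    · intro x hx
      simp only [F, Finset.mem_filter, Finset.mem_range] at hx ⊢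
      exact ⟨Nat.xor_lt_two_pow hx.1 ht, by rw [syndrome_xor, hx.2, hts, Nat.xor_self]⟩
    · intro x hx
      simp only [F, Finset.mem_filter, Finset.mem_range] at hx ⊢
      exact ⟨Nat.xor_lt_two_pow hx.1 ht, by rw [syndrome_xor, hx.2, hts, Nat.zero_xor]⟩
    · intro x _
      simp
    · intro x _
      simp
  have hda : d ≤ a := by
    have : d - 1 < 2 ^ (d - 1) := Nat.lt_two_pow_self
    omega
  have hcard0 : (F 0).card = 2 ^ (a - d) := by
    have h := congrArg Finset.card hcover
    rw [Finset.card_biUnion (fun j _ k _ hjk => hdisj j k hjk)] at h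
    simp only [hcard, Finset.sum_const, Finset.card_univ, Fintype.card_fin, smul_eq_mul,
      Finset.card_range] at h
    refine Nat.eq_of_mul_eq_mul_left (show 0 < 2 ^ d by positivity) ?_
    rw [h, ← pow_add, Nat.add_sub_cancel' hda]
  refine ⟨fun j => F j, hdisj, hcover, fun j => (hcard j).trans hcard0, ?_⟩
  intro j x hx y hy hxy
  simp only [F, Finset.mem_filter] at hx hy
  exact Nset_inter_eq_empty (hx.2.trans hy.2.symm) hxy
end

section
/- Let a ≥ 1 be an integer, let d be the unique positive integer with 2^{d-1} ≤ a < 2^d, and let x ∈ M_a. Then the matrix Q̃_x is symmetric and satisfies Q̃_x^T · Q̃_x = 2·I_{2^a}; in particular 2^{-1/2}·Q̃_x is an orthogonal matrix. -/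
/-!
Write `S` for the digit sum in `f(x)`, so that `f(x) = 2^(x-1) + S`. A binary digit of `x` at
position `j` gives `2^j ≤ x`, and `2^j ≠ x` because `x` is not a power of two; hence `S` is a sum of
distinct powers of two with exponents below `x - 1`, and `S < 2^(x-1)`. Therefore `f(x) < 2^x ≤ 2^a`
and bit `x - 1` of `f(x)` is set (`fM_lt`, `testBit_fM`).

Consequently `σ : i ↦ i ⊕ f(x)` is an involution of the index set which flips bit `x - 1`, and
`Q̃_x = D + P`, where `D` is the diagonal matrix of the signs `s i = (-1)^(bit x-1 of i)` and `P` is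
the permutation matrix of `σ`. Both are symmetric, `D² = P² = 1`, and `DP + PD = 0` because
`s (σ i) = - s i`. So `Q̃_x² = 2`.
-/

open Matrix

/-- The `2^a × 2^a` real matrix `Q̃_x`:  `Q̃_x(i, i) = (-1)^(bit (x-1) of i)`,
`Q̃_x(i, i ⊕ f(x)) = 1`, and all other entries are `0`. -/
def Qt (a x : ℕ) : Matrix (Fin (2 ^ a)) (Fin (2 ^ a)) ℝ :=
  Matrix.of fun i j =>
    if (j : ℕ) = (i : ℕ) then (if Nat.testBit (i : ℕ) (x - 1) then -1 else 1)
    else if (j : ℕ) = (i : ℕ) ^^^ fM x then 1 else 0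

/-- The digit sum in `f(x)` lies below `2^(x-1)`; this is where `x` not being a power of two is
used. -/
lemma digitSum_lt (x : ℕ) (hx : ∀ k : ℕ, x ≠ 2 ^ k) :
    (∑ j ∈ Finset.range x, if Nat.testBit x j then 2 ^ (2 ^ j - 1) else 0) < 2 ^ (x - 1) := by
  rw [← Finset.sum_filter]
  have hinj : Set.InjOn (fun j : ℕ => 2 ^ j - 1)
      ((Finset.range x).filter fun j => Nat.testBit x j = true) := by
    intro i _ j _ hij
    have hi : 0 < 2 ^ i := Nat.two_pow_pos i
    have hj : 0 < 2 ^ j := Nat.two_pow_pos j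
    have : 2 ^ i = 2 ^ j := by
      simp only at hij
      omega
    exact Nat.pow_right_injective (le_refl 2) this
  rw [← Finset.sum_image (f := fun k : ℕ => 2 ^ k) hinj]
  refine Nat.geomSum_lt (le_refl 2) ?_
  intro k hk
  obtain ⟨j, hj, rfl⟩ := Finset.mem_image.mp hk
  have hle : 2 ^ j ≤ x := Nat.ge_two_pow_of_testBit (Finset.mem_filter.mp hj).2
  have hne := hx j
  have hpos : 0 < 2 ^ j := Nat.two_pow_pos j
  omega

lemma fM_lt {a x : ℕ} (hx : x ∈ Ma a) : fM x < 2 ^ a := by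
  obtain ⟨hx1, hxa, hxp⟩ := hx
  have hS := digitSum_lt x hxp
  have hpow : 2 ^ x = 2 ^ (x - 1) + 2 ^ (x - 1) := by
    rw [← Nat.two_pow_pred_add_two_pow_pred hx1]
  have hle : 2 ^ x ≤ 2 ^ a := Nat.pow_le_pow_right (by norm_num) hxa
  unfold fM
  omega

lemma testBit_fM_s15 {a x : ℕ} (hx : x ∈ Ma a) : Nat.testBit (fM x) (x - 1) = true := by
  have hS := digitSum_lt x hx.2.2
  rw [fM, Nat.testBit_two_pow_add_eq, Nat.testBit_lt_two_pow hS]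
  rfl

/-- The involution `i ↦ i ⊕ f(x)` of the index set. -/
def xorIdx {a x : ℕ} (hx : x ∈ Ma a) (i : Fin (2 ^ a)) : Fin (2 ^ a) :=
  ⟨(i : ℕ) ^^^ fM x, Nat.xor_lt_two_pow i.isLt (fM_lt hx)⟩

/-- The diagonal sign `(-1)^(bit x-1 of i)` of `Q̃_x`. -/
def diagSign (a x : ℕ) (i : Fin (2 ^ a)) : ℝ :=
  if Nat.testBit (i : ℕ) (x - 1) then -1 else 1

lemma xorIdx_xorIdx {a x : ℕ} (hx : x ∈ Ma a) (i : Fin (2 ^ a)) :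
    xorIdx hx (xorIdx hx i) = i := by
  apply Fin.ext
  simp [xorIdx]

lemma eq_xorIdx_comm {a x : ℕ} (hx : x ∈ Ma a) (i j : Fin (2 ^ a)) :
    i = xorIdx hx j ↔ j = xorIdx hx i := by
  constructor <;> rintro rfl <;> rw [xorIdx_xorIdx]

lemma diagSign_xorIdx {a x : ℕ} (hx : x ∈ Ma a) (i : Fin (2 ^ a)) :
    diagSign a x (xorIdx hx i) = - diagSign a x i := by
  simp only [diagSign, xorIdx, Nat.testBit_xor, testBit_fM_s15 hx]
  cases Nat.testBit (i : ℕ) (x - 1) <;> simp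

lemma diagSign_mul_self (a x : ℕ) (i : Fin (2 ^ a)) :
    diagSign a x i * diagSign a x i = 1 := by
  unfold diagSign
  split_ifs <;> norm_num

lemma xorIdx_ne {a x : ℕ} (hx : x ∈ Ma a) (i : Fin (2 ^ a)) : xorIdx hx i ≠ i := by
  intro h
  have h1 := diagSign_xorIdx hx i
  have h2 := diagSign_mul_self a x i
  rw [h] at h1
  nlinarith

/-- The decomposition `Q̃_x = D + P`, entrywise. The two supports are disjoint because `xorIdx` has
no fixed point. -/
lemma Qt_apply {a x : ℕ} (hx : x ∈ Ma a) (i j : Fin (2 ^ a)) :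
    Qt a x i j = (if j = i then diagSign a x i else 0) + (if j = xorIdx hx i then 1 else 0) := by
  have e : ((j : ℕ) = (i : ℕ) ^^^ fM x) ↔ j = xorIdx hx i := by
    rw [Fin.ext_iff]
    rfl
  simp only [Qt, Matrix.of_apply, e, ← Fin.ext_iff, diagSign]
  by_cases h : j = i
  · subst h
    simp [(xorIdx_ne hx j).symm]
  · simp [h]

lemma Qt_transpose {a x : ℕ} (hx : x ∈ Ma a) : (Qt a x)ᵀ = Qt a x := by
  ext i j
  rw [Matrix.transpose_apply, Qt_apply hx, Qt_apply hx]
  congr 1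
  · by_cases h : i = j
    · rw [h]
    · rw [if_neg h, if_neg (Ne.symm h)]
  · simp only [eq_xorIdx_comm hx i j]

lemma Qt_mul_self {a x : ℕ} (hx : x ∈ Ma a) : Qt a x * Qt a x = (2 : ℝ) • 1 := by
  ext i k
  -- Row `i` has its entries at columns `i` and `σ i`, so only these two rows contribute.
  have hrow : (Qt a x * Qt a x) i k =
      diagSign a x i * Qt a x i k + Qt a x (xorIdx hx i) k := by
    rw [Matrix.mul_apply]
    simp only [Qt_apply hx i, add_mul, Finset.sum_add_distrib, ite_mul, zero_mul, one_mul,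
      Finset.sum_ite_eq', Finset.mem_univ, if_true]
  rw [hrow, Qt_apply hx, Qt_apply hx, xorIdx_xorIdx, diagSign_xorIdx, Matrix.smul_apply,
    Matrix.one_apply, smul_eq_mul]
  have hs := diagSign_mul_self a x i
  by_cases h : k = i
  · subst h
    simp only [if_true, if_neg (xorIdx_ne hx k).symm]
    linarith
  · simp only [if_neg h, if_neg (Ne.symm h)]
    split_ifs <;> ring

/-- Let `d` be the unique positive integer with `2^(d-1) ≤ a < 2^d` and `x ∈ M_a`.
Then `Q̃_x` is symmetric and satisfies `Q̃_xᵀ · Q̃_x = 2·I`; in particular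
`2^{-1/2}·Q̃_x` is an orthogonal matrix. -/
theorem Qt_symm_and_orthogonal (a d : ℕ) (ha : 1 ≤ a) (hd : 1 ≤ d)
    (h1 : 2 ^ (d - 1) ≤ a) (h2 : a < 2 ^ d) (x : ℕ) (hx : x ∈ Ma a) :
    (Qt a x)ᵀ = Qt a x ∧
    (Qt a x)ᵀ * Qt a x = (2 : ℝ) • 1 ∧
    ((Real.sqrt 2)⁻¹ • Qt a x)ᵀ * ((Real.sqrt 2)⁻¹ • Qt a x) = 1 := by
  have hT := Qt_transpose hx
  have hM := Qt_mul_self hx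
  refine ⟨hT, by rw [hT, hM], ?_⟩
  rw [Matrix.transpose_smul, hT, Matrix.smul_mul, Matrix.mul_smul, hM, smul_smul, smul_smul]
  have h : (Real.sqrt 2)⁻¹ * (Real.sqrt 2)⁻¹ * 2 = 1 := by
    rw [← mul_inv, Real.mul_self_sqrt (by norm_num)]
    norm_num
  rw [h, one_smul]
end
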